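/- Let Γ = (𝒱, ℰ) be a quantum hypergraph with d = dim 𝒱 ≥ 2 and suppose there is a probability distribution P₀ on ℰ with ∑_E P₀(E)·E positive definite. Set C = −log( max_P λ_min(∑_{E∈ℰ} P(E)·E) ), the maximum over probability distributions P on ℰ of the minimal eigenvalue. For n ≥ 1 let Γⁿ = (𝒱^{⊗n}, ℰⁿ) with ℰⁿ = {E₁ ⊗ ⋯ ⊗ Eₙ : Eᵢ ∈ ℰ}, let c(n) be the minimum cardinality of a covering of Γⁿ, and let c̃(n) be the minimum of ∑_{Eⁿ} v(Eⁿ) over all nonnegative weight functions v on ℰⁿ with ∑_{Eⁿ} v(Eⁿ)·Eⁿ ≥ 𝟙^{⊗n}. Then c̃(n) ≥ 2^{Cn}, c(n) ≤ 1 + 8·(ln 2 · log d)·n·2^{Cn}, and consequently (1/n)·log c(n) → C and (1/n)·log c̃(n) → C as n → ∞. -/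

import Mathlib

open scoped BigOperators
open ComplexOrder
open scoped Matrix

def IsProbDist {α : Type*} [Fintype α] (P : α → ℝ) : Prop :=
  (∀ a, 0 ≤ P a) ∧ ∑ a, P a = 1

/-- Minimal eigenvalue of a (Hermitian) matrix. -/
noncomputable def lamMin {m : Type*} [Fintype m] [DecidableEq m] (A : Matrix m m ℂ) : ℝ :=
  if h : A.IsHermitian then ⨅ i, h.eigenvalues i else 0

/-- n-fold tensor product of edges. -/
def tpow {d : ℕ} {ι : Type*} (Ed : ι → Matrix (Fin d) (Fin d) ℂ) (n : ℕ)
    (en : Fin n → ι) : Matrix (Fin n → Fin d) (Fin n → Fin d) ℂ :=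
  Matrix.of fun i j => ∏ k, Ed (en k) (i k) (j k)


noncomputable def rip {m : Type*} [Fintype m] (x y : m → ℂ) : ℝ := (star x ⬝ᵥ y).re

section ripsec
variable {m : Type*} [Fintype m]

lemma rip_add (x y z : m → ℂ) : rip x (y + z) = rip x y + rip x z := by
  simp [rip, dotProduct_add]

lemma rip_sub (x y z : m → ℂ) : rip x (y - z) = rip x y - rip x z := by
  simp [rip, dotProduct_sub]

lemma rip_smul (t : ℝ) (x y : m → ℂ) : rip x ((t : ℂ) • y) = t * rip x y := by
  simp [rip, dotProduct_smul]

lemma rip_comm (x y : m → ℂ) : rip x y = rip y x := by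
  unfold rip
  rw [← Complex.conj_re, ← starRingEnd_apply, Complex.conj_re]
  rw [dotProduct_comm, ← Complex.conj_re]
  congr 1
  simp [dotProduct, mul_comm]

lemma rip_self (x : m → ℂ) : rip x x = ∑ i, ‖x i‖ ^ 2 := by
  simp [rip, dotProduct, Complex.sq_norm, Complex.normSq_apply]

lemma rip_mulVec_mulVec (A B : Matrix m m ℂ) (x y : m → ℂ) :
    rip (A *ᵥ x) (B *ᵥ y) = rip x ((Aᴴ * B) *ᵥ y) := by
  unfold rip
  rw [Matrix.star_mulVec, ← Matrix.mulVec_mulVec, Matrix.dotProduct_mulVec (star x) Aᴴ]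

lemma rip_psd {A : Matrix m m ℂ} (hA : A.PosSemidef) (x : m → ℂ) : 0 ≤ rip x (A *ᵥ x) := by
  have := hA.dotProduct_mulVec_nonneg x
  exact (Complex.le_def.1 this).1

lemma rip_herm {A : Matrix m m ℂ} (hA : A.IsHermitian) (x y : m → ℂ) :
    rip x (A *ᵥ y) = rip y (A *ᵥ x) := by
  rw [rip_comm x]
  unfold rip
  rw [Matrix.star_mulVec, hA.eq, Matrix.dotProduct_mulVec]

lemma psd_of_rip {A : Matrix m m ℂ} (hA : A.IsHermitian) (h : ∀ x, 0 ≤ rip x (A *ᵥ x)) :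
    A.PosSemidef := by
  refine .of_dotProduct_mulVec_nonneg hA fun x => ?_
  rw [Complex.le_def]
  refine ⟨h x, ?_⟩
  have h2 := hA.im_star_dotProduct_mulVec_self x
  simpa using h2.symm

lemma psd_trace_re {A : Matrix m m ℂ} (hA : A.PosSemidef) : 0 ≤ A.trace.re :=
  (Complex.le_def.1 hA.trace_nonneg).1

lemma psd_smul {A : Matrix m m ℂ} (hA : A.PosSemidef) {t : ℝ} (ht : 0 ≤ t) :
    ((t : ℂ) • A).PosSemidef := 
  hA.smul (by exact_mod_cast ht)

open scoped MatrixOrder in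
lemma psd_factor [DecidableEq m] {A : Matrix m m ℂ} (hA : A.PosSemidef) :
    ∃ B : Matrix m m ℂ, A = Bᴴ * B := by
  obtain ⟨B, hB⟩ := CStarAlgebra.nonneg_iff_eq_star_mul_self.mp hA.nonneg
  exact ⟨B, hB⟩

lemma psd_trace_mul [DecidableEq m] {A B : Matrix m m ℂ} (hA : A.PosSemidef) (hB : B.PosSemidef) :
    0 ≤ (A * B).trace := by
  obtain ⟨S, rfl⟩ := psd_factor hA
  rw [Matrix.mul_assoc, Matrix.trace_mul_comm]
  exact (hB.mul_mul_conjTranspose_same S).trace_nonneg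

lemma psd_sub_sq [DecidableEq m] {E : Matrix m m ℂ} (h : E.PosSemidef) (h' : (1 - E).PosSemidef) :
    (E - E * E).PosSemidef := by
  have h1 := h'.conjTranspose_mul_mul_same E
  have h2 := h.conjTranspose_mul_mul_same (1 - E)
  rw [h.1.eq] at h1
  rw [h'.1.eq] at h2
  have := h1.add h2
  convert this using 1
  noncomm_ring

lemma psd_half [DecidableEq m] {E : Matrix m m ℂ} (h : E.PosSemidef) (h' : (1 - E).PosSemidef) :
    (1 - ((3/4 : ℝ) : ℂ) • E -
      (1 - ((1/2 : ℝ) : ℂ) • E)ᴴ * (1 - ((1/2 : ℝ) : ℂ) • E)).PosSemidef := by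
  convert psd_smul (psd_sub_sq h h') (t := 1/4) (by norm_num) using 1
  rw [Matrix.conjTranspose_sub, Matrix.conjTranspose_smul, h.1.eq]
  simp only [Matrix.conjTranspose_one, sub_mul, mul_sub, one_mul, mul_one, smul_mul_assoc,
    mul_smul_comm, smul_smul, smul_sub]
  simp
  module

lemma rip_mulVec_le (Q : Matrix m m ℂ) (v : m → ℂ) :
    rip (Q *ᵥ v) (Q *ᵥ v) ≤ (Qᴴ * Q).trace.re * rip v v := by
  have h1 : (Qᴴ * Q).trace.re = ∑ i, ∑ j, ‖Q i j‖ ^ 2 := by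
    rw [Finset.sum_comm]
    simp [Matrix.trace, Matrix.mul_apply, Complex.sq_norm, Complex.normSq_apply]
  rw [h1, rip_self, rip_self, Finset.sum_mul]
  refine Finset.sum_le_sum fun i _ => ?_
  calc ‖(Q *ᵥ v) i‖ ^ 2 ≤ (∑ j, ‖Q i j‖ * ‖v j‖) ^ 2 := by
        gcongr
        refine (norm_sum_le _ _).trans (le_of_eq ?_)
        simp
    _ ≤ _ := Finset.sum_mul_sq_le_sq_mul_sq _ _ _

lemma rip_young {A : Matrix m m ℂ} (hA : A.PosSemidef) (x y : m → ℂ) :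
    2 * rip x (A *ᵥ y) ≤ rip x (A *ᵥ x) + rip y (A *ᵥ y) := by
  have h := rip_psd hA (x - y)
  rw [Matrix.mulVec_sub, rip_sub, rip_comm (x - y), rip_comm (x - y), rip_sub, rip_sub,
    rip_comm _ x, rip_comm _ x, rip_comm _ y, rip_comm _ y, rip_herm hA.1 y x] at h
  linarith
end ripsec

section coversec
variable {m : Type*} [Fintype m] [DecidableEq m] {κ : Type*} [Fintype κ]

noncomputable def hstep (E : Matrix m m ℂ) : Matrix m m ℂ := 1 - ((1/2 : ℝ) : ℂ) • E

lemma exists_step (F : κ → Matrix m m ℂ)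
    (hF : ∀ i, (F i).PosSemidef ∧ (1 - F i).PosSemidef) (p : κ → ℝ) (hp : IsProbDist p)
    (μ : ℝ) (hM : ((∑ i, (p i : ℂ) • F i) - (μ : ℂ) • 1).PosSemidef) (Q : Matrix m m ℂ) :
    ∃ e, ((hstep (F e) * Q)ᴴ * (hstep (F e) * Q)).trace.re
      ≤ (1 - 3/4 * μ) * (Qᴴ * Q).trace.re := by
  have h1 : μ * (Qᴴ * Q).trace.re ≤ ∑ i, p i * (Qᴴ * F i * Q).trace.re := by
    have := psd_trace_re (hM.conjTranspose_mul_mul_same Q)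
    rw [mul_sub, sub_mul, Matrix.trace_sub, Finset.mul_sum, Finset.sum_mul, Matrix.trace_sum] at this
    simp at this
    linarith
  obtain ⟨e, he⟩ : ∃ e, μ * (Qᴴ * Q).trace.re ≤ (Qᴴ * F e * Q).trace.re := by
    by_contra! hcon
    have : ∑ i, p i * (Qᴴ * F i * Q).trace.re < ∑ i, p i * (μ * (Qᴴ * Q).trace.re) := by
      apply Finset.sum_lt_sum
      · intro i _
        exact mul_le_mul_of_nonneg_left (hcon i).le (hp.1 i)
      · obtain ⟨i, -, hi⟩ := Finset.exists_ne_zero_of_sum_ne_zero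
          (s := Finset.univ) (f := p) (by rw [hp.2]; norm_num)
        exact ⟨i, Finset.mem_univ _, mul_lt_mul_of_pos_left (hcon i)
          (lt_of_le_of_ne (hp.1 i) (Ne.symm hi))⟩
    rw [← Finset.sum_mul, hp.2] at this
    linarith
  refine ⟨e, ?_⟩
  have h2 := psd_trace_re ((psd_half (hF e).1 (hF e).2).conjTranspose_mul_mul_same Q)
  have h3 : (hstep (F e) * Q)ᴴ * (hstep (F e) * Q) =
    Qᴴ * ((1 - ((1/2 : ℝ) : ℂ) • F e)ᴴ * (1 - ((1/2 : ℝ) : ℂ) • F e)) * Q := by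
    rw [Matrix.conjTranspose_mul]
    simp only [hstep, Matrix.mul_assoc]
  rw [h3]
  rw [mul_sub, sub_mul, Matrix.trace_sub, mul_sub, sub_mul, Matrix.trace_sub] at h2
  rw [mul_one, mul_smul_comm, smul_mul_assoc, Matrix.trace_smul, smul_eq_mul, Complex.sub_re,
    Complex.sub_re, Complex.re_ofReal_mul] at h2
  linarith

lemma vec_invariant (F : κ → Matrix m m ℂ)
    (hF : ∀ i, (F i).PosSemidef ∧ (1 - F i).PosSemidef) (s : ℕ → κ) (Q : ℕ → Matrix m m ℂ)
    (h0 : Q 0 = 1) (hQ : ∀ k, Q (k+1) = hstep (F (s k)) * Q k) (v : m → ℂ) (k : ℕ) :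
    rip v v - 1/4 * ∑ i ∈ Finset.range k, rip v (F (s i) *ᵥ v)
      - 1/3 * (rip v v - rip (Q k *ᵥ v) (Q k *ᵥ v)) ≤ rip v (Q k *ᵥ v) := by
  induction k with
  | zero => simp [h0]
  | succ k ih =>
    rw [Finset.sum_range_succ, hQ, ← Matrix.mulVec_mulVec]
    set y := Q k *ᵥ v
    set E := F (s k)
    have a1 : rip v (hstep E *ᵥ y) = rip v y - 1/2 * rip v (E *ᵥ y) := by
      rw [hstep, Matrix.sub_mulVec, rip_sub, Matrix.smul_mulVec, rip_smul, Matrix.one_mulVec]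
    have a2 := rip_young (hF (s k)).1 v y
    have a3 : rip (hstep E *ᵥ y) (hstep E *ᵥ y) ≤ rip y y - 3/4 * rip y (E *ᵥ y) := by
      have := rip_psd (psd_half (hF (s k)).1 (hF (s k)).2) y
      rw [rip_mulVec_mulVec]
      rw [Matrix.sub_mulVec, rip_sub, Matrix.sub_mulVec, rip_sub, Matrix.smul_mulVec, rip_smul,
        Matrix.one_mulVec] at this
      unfold hstep
      linarith
    rw [a1]
    change 2 * rip v (E *ᵥ y) ≤ _ at a2
    linarith

lemma exists_cover (F : κ → Matrix m m ℂ)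
    (hF : ∀ i, (F i).PosSemidef ∧ (1 - F i).PosSemidef) (p : κ → ℝ) (hp : IsProbDist p)
    (μ : ℝ) (hμ : μ ≤ 1) (hM : ((∑ i, (p i : ℂ) • F i) - (μ : ℂ) • 1).PosSemidef) (k : ℕ)
    (hk : (Fintype.card m : ℝ) * (1 - 3/4 * μ) ^ k < 25/144) :
    ∃ sel : Fin k → κ, ((∑ j, F (sel j)) - 1).PosSemidef := by
  choose e he using exists_step F hF p hp μ hM
  let Q : ℕ → Matrix m m ℂ := fun k => Nat.rec 1 (fun _ Q => hstep (F (e Q)) * Q) k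
  have hQ : ∀ k, Q (k+1) = hstep (F (e (Q k))) * Q k := fun k => rfl
  have hT : ∀ k, ((Q k)ᴴ * Q k).trace.re ≤ (Fintype.card m : ℝ) * (1 - 3/4 * μ) ^ k := by
    intro k
    induction k with
    | zero => simp [Q]
    | succ k ih =>
      rw [hQ]
      refine (he (Q k)).trans ?_
      have := mul_le_mul_of_nonneg_left ih (show 0 ≤ 1 - 3/4 * μ by linarith)
      rw [pow_succ]
      linarith
  refine ⟨fun j => e (Q j), ?_⟩
  have hS : (∑ j : Fin k, F (e (Q j))).PosSemidef :=
    Matrix.posSemidef_sum _ fun j _ => (hF _).1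
  refine psd_of_rip (hS.1.sub Matrix.isHermitian_one) fun v => ?_
  have hsum : rip v ((∑ j : Fin k, F (e (Q j))) *ᵥ v)
      = ∑ i ∈ Finset.range k, rip v (F (e (Q i)) *ᵥ v) := by
    rw [Finset.sum_range, Matrix.sum_mulVec]
    simp [rip, dotProduct_sum]
  have inv := vec_invariant F hF (fun k => e (Q k)) Q rfl hQ v k
  simp only [← hsum] at inv
  have hpos := rip_psd hS v
  rw [Matrix.sub_mulVec, rip_sub, Matrix.one_mulVec]
  by_contra! hcon
  have n0 : 0 < rip v v := by linarith
  have b1 := (rip_mulVec_le (Q k) v).trans (mul_le_mul_of_nonneg_right (hT k) n0.le)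
  have b2 := mul_lt_mul_of_pos_right hk n0
  set y := Q k *ᵥ v
  have b0 : 0 ≤ rip y y := by rw [rip_self]; positivity
  have b3 : 0 ≤ rip (y - ((5/12 : ℝ) : ℂ) • v) (y - ((5/12 : ℝ) : ℂ) • v) := by
    rw [rip_self]; positivity
  rw [rip_sub, rip_smul, rip_comm _ y, rip_comm _ v, rip_sub, rip_sub, rip_smul, rip_smul,
    rip_comm y v] at b3
  linarith
end coversec

section tensec
variable {d n : ℕ}

def tens (A : Fin n → Matrix (Fin d) (Fin d) ℂ) : Matrix (Fin n → Fin d) (Fin n → Fin d) ℂ :=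
  Matrix.of fun i j => ∏ k, A k (i k) (j k)

lemma tens_mul (A B : Fin n → Matrix (Fin d) (Fin d) ℂ) :
    tens A * tens B = tens (fun k => A k * B k) := by
  ext i j
  simp only [tens, Matrix.mul_apply, Matrix.of_apply, Finset.prod_univ_sum, Fintype.piFinset_univ,
    Finset.prod_mul_distrib]

lemma tens_trace (A : Fin n → Matrix (Fin d) (Fin d) ℂ) :
    (tens A).trace = ∏ k, (A k).trace := by
  simp only [tens, Matrix.trace, Matrix.diag, Matrix.of_apply, Finset.prod_univ_sum,
    Fintype.piFinset_univ]

lemma tens_smul (t : Fin n → ℂ) (A : Fin n → Matrix (Fin d) (Fin d) ℂ) :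
    tens (fun k => t k • A k) = (∏ k, t k) • tens A := by
  ext i j
  simp [tens, Finset.prod_mul_distrib]

lemma tens_one : tens (fun _ : Fin n => (1 : Matrix (Fin d) (Fin d) ℂ)) = 1 := by
  ext i j
  simp only [tens, Matrix.of_apply, Matrix.one_apply]
  split_ifs with h
  · simp [h]
  · obtain ⟨k, hk⟩ := Function.ne_iff.1 h
    exact Finset.prod_eq_zero (Finset.mem_univ k) (by simp [hk])

lemma tens_sum {β : Type*} [Fintype β] (X : Fin n → β → Matrix (Fin d) (Fin d) ℂ) :
    tens (fun k => ∑ b, X k b) = ∑ f : Fin n → β, tens (fun k => X k (f k)) := by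
  ext i j
  simp only [tens, Matrix.of_apply, Matrix.sum_apply, Finset.prod_univ_sum, Fintype.piFinset_univ]

lemma tens_psd (A : Fin n → Matrix (Fin d) (Fin d) ℂ) (hA : ∀ k, (A k).PosSemidef) :
    (tens A).PosSemidef := by
  choose B hB using fun k => psd_factor (hA k)
  have h : tens A = (tens B)ᴴ * tens B := by
    have : (tens B)ᴴ = tens (fun k => (B k)ᴴ) := by
      ext i j
      simp [tens, Matrix.conjTranspose_apply]
    rw [this, tens_mul]
    congr 1
    funext k
    exact hB k
  rw [h]
  exact Matrix.posSemidef_conjTranspose_mul_self _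

lemma tens_mono (A B : Fin n → Matrix (Fin d) (Fin d) ℂ) (hA : ∀ k, (A k).PosSemidef)
    (hB : ∀ k, (B k - A k).PosSemidef) : (tens B - tens A).PosSemidef := by
  have h : tens B = ∑ f : Fin n → Bool, tens (fun k => if f k then A k else B k - A k) := by
    rw [← tens_sum (fun k (b : Bool) => if b then A k else B k - A k)]
    simp
  rw [h, ← Finset.add_sum_erase _ _ (Finset.mem_univ (fun _ => true))]
  simp only [if_true, add_sub_cancel_left]
  refine Matrix.posSemidef_sum _ fun f _ => tens_psd _ fun k => ?_
  split_ifs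
  · exact hA k
  · exact hB k
end tensec

section lamsec
variable {m : Type*} [Fintype m] [DecidableEq m]

lemma le_lamMin_iff [Nonempty m] {A : Matrix m m ℂ} (hA : A.IsHermitian) (x : ℝ) :
    x ≤ lamMin A ↔ (A - (x : ℂ) • 1).PosSemidef := by
  rw [lamMin, dif_pos hA, le_ciInf_iff (Set.finite_range _).bddBelow]
  constructor
  · intro h
    have h1 : (Matrix.diagonal (fun i => ((hA.eigenvalues i - x : ℝ) : ℂ))).PosSemidef := by
      apply Matrix.PosSemidef.diagonal
      intro i
      have := h i
      simp only [Pi.zero_apply, Complex.zero_le_real]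
      linarith
    have h2 := h1.mul_mul_conjTranspose_same (hA.eigenvectorUnitary : Matrix m m ℂ)
    convert h2 using 1
    have h3 : Matrix.diagonal (fun i => ((hA.eigenvalues i - x : ℝ) : ℂ))
      = Matrix.diagonal (RCLike.ofReal ∘ hA.eigenvalues) - (x : ℂ) • (1 : Matrix m m ℂ) := by
      ext i j
      by_cases hij : i = j
      · subst hij
        simp
      · simp [hij]
    rw [h3, mul_sub, sub_mul]
    conv_lhs => rw [hA.spectral_theorem, Unitary.conjStarAlgAut_apply]
    congr 1
    rw [mul_smul_comm, smul_mul_assoc, mul_one, ← Matrix.star_eq_conjTranspose,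
      Unitary.mul_star_self_of_mem hA.eigenvectorUnitary.2]
  · intro h i
    have h1 := rip_psd h (hA.eigenvectorBasis i)
    rw [Matrix.sub_mulVec, rip_sub, Matrix.smul_mulVec, rip_smul, Matrix.one_mulVec] at h1
    have h2 := hA.eigenvalues_eq i
    have h3 : rip (hA.eigenvectorBasis i).ofLp (hA.eigenvectorBasis i).ofLp = 1 := by
      rw [rip_self, ← EuclideanSpace.norm_sq_eq, hA.eigenvectorBasis.orthonormal.1 i]
      norm_num
    rw [h3] at h1
    change hA.eigenvalues i = rip _ _ at h2
    linarith

lemma psd_smul_one_herm (l : ℝ) : ((l : ℂ) • (1 : Matrix m m ℂ)).IsHermitian := by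
  rw [Matrix.IsHermitian, Matrix.conjTranspose_smul]
  simp

lemma trace_vecMulVec_mul (v : m → ℂ) (A : Matrix m m ℂ) :
    (Matrix.vecMulVec v (star v) * A).trace.re = rip v (A *ᵥ v) := by
  rw [Matrix.vecMulVec_mul, Matrix.trace_vecMulVec, rip, Matrix.dotProduct_mulVec, dotProduct_comm]

lemma minimax [Nonempty m] {ι : Type*} [Fintype ι] [Nonempty ι] (Ed : ι → Matrix m m ℂ)
    (hE : ∀ i, (Ed i).PosSemidef) (l : ℝ)
    (h : ∀ P : ι → ℝ, IsProbDist P → lamMin (∑ i, (P i : ℂ) • Ed i) < l) :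
    ∃ ρ : Matrix m m ℂ, ρ.PosSemidef ∧ ρ.trace = 1 ∧ ∀ i, (ρ * Ed i).trace.re < l := by
  classical
  by_contra! hcon
  let s : Set (ι → ℝ) := Set.univ.pi fun _ => Set.Iio l
  let t : Set (ι → ℝ) := {x | ∃ ρ : Matrix m m ℂ, ρ.PosSemidef ∧ ρ.trace = 1 ∧
    x = fun i => (ρ * Ed i).trace.re}
  have hs1 : Convex ℝ s := convex_pi fun _ _ => convex_Iio l
  have hs2 : IsOpen s := isOpen_set_pi Set.finite_univ fun _ _ => isOpen_Iio
  have ht : Convex ℝ t := by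
    rintro x ⟨ρ, h1, h2, rfl⟩ y ⟨σ, h3, h4, rfl⟩ a b ha hb hab
    refine ⟨(a : ℂ) • ρ + (b : ℂ) • σ, (psd_smul h1 ha).add (psd_smul h3 hb), ?_, ?_⟩
    · rw [Matrix.trace_add, Matrix.trace_smul, Matrix.trace_smul, h2, h4]
      simp only [smul_eq_mul, mul_one]
      exact_mod_cast hab
    · funext i
      simp [add_mul]
  have hd : Disjoint s t := by
    rw [Set.disjoint_left]
    rintro x hx ⟨ρ, h1, h2, rfl⟩
    obtain ⟨i, hi⟩ := hcon ρ h1 h2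
    have := hx i (Set.mem_univ i)
    simp only [Set.mem_Iio] at this
    linarith
  obtain ⟨f, u, hfs, hft⟩ := geometric_hahn_banach_open hs1 hs2 ht hd
  let p : ι → ℝ := fun i => f (Pi.single i 1)
  have hf : ∀ x, f x = ∑ i, x i * p i := fun x => by
    have := LinearMap.pi_apply_eq_sum_univ (f : (ι → ℝ) →ₗ[ℝ] ℝ) x
    simp only [smul_eq_mul, ContinuousLinearMap.coe_coe] at this
    rw [this]
    refine Finset.sum_congr rfl fun i _ => ?_
    congr 2
    funext j
    simp [Pi.single_apply, eq_comm]
  have hrank : ∀ v : m → ℂ, v ≠ 0 → u * rip v v ≤ ∑ i, rip v (Ed i *ᵥ v) * p i := by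
    intro v hv
    have n0 : 0 < rip v v := by
      rw [rip_self]
      obtain ⟨i, hi⟩ := Function.ne_iff.1 hv
      exact Finset.sum_pos' (fun _ _ => by positivity) ⟨i, Finset.mem_univ _, by
        have : 0 < ‖v i‖ := norm_pos_iff.2 hi
        positivity⟩
    have htr : (Matrix.vecMulVec v (star v)).trace = ((rip v v : ℝ) : ℂ) := by
      rw [Matrix.trace_vecMulVec, rip_self]
      simp [dotProduct, Complex.mul_conj, Complex.normSq_eq_norm_sq]
    have := hft (fun i => ((((rip v v)⁻¹ : ℝ) : ℂ) • Matrix.vecMulVec v (star v) * Ed i).trace.re)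
      ⟨_, psd_smul (Matrix.posSemidef_vecMulVec_self_star v) (inv_nonneg.2 n0.le), by
        rw [Matrix.trace_smul, htr, smul_eq_mul, ← Complex.ofReal_mul, inv_mul_cancel₀ n0.ne']
        simp, rfl⟩
    rw [hf] at this
    simp only [smul_mul_assoc, Matrix.trace_smul, smul_eq_mul, Complex.re_ofReal_mul,
      trace_vecMulVec_mul] at this
    calc u * rip v v ≤ (∑ i, (rip v v)⁻¹ * rip v (Ed i *ᵥ v) * p i) * rip v v := by gcongr
      _ = _ := by
        rw [Finset.sum_mul]
        refine Finset.sum_congr rfl fun i _ => ?_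
        field_simp
  have hp0 : ∀ i, 0 ≤ p i := by
    intro i
    by_contra! hi
    have hx : ∀ τ : ℝ, 0 ≤ τ → f (fun _ => l - 1) - τ * p i < u := by
      intro τ hτ
      have := hfs ((fun _ => l - 1) - τ • Pi.single i 1) (fun j _ => by
        simp only [Pi.sub_apply, Pi.smul_apply, Pi.single_apply, Set.mem_Iio, smul_eq_mul]
        split_ifs <;> linarith)
      rw [map_sub, map_smul, smul_eq_mul] at this
      exact this
    have h0 := hx 0 le_rfl
    have h1 := hx ((u - f (fun _ => l - 1)) / (- p i)) (by
      apply div_nonneg <;> linarith)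
    have : (u - f (fun _ => l - 1)) / (- p i) * p i = - (u - f (fun _ => l - 1)) := by
      have hne : p i ≠ 0 := hi.ne
      field_simp
    linarith
  have hlu : l * ∑ i, p i ≤ u := by
    by_contra! hh
    have hx : ∀ ε : ℝ, 0 < ε → (l - ε) * ∑ i, p i < u := by
      intro ε hε
      have := hfs (fun _ => l - ε) (fun j _ => by simp [hε])
      rwa [hf, ← Finset.mul_sum] at this
    have hpp : 0 ≤ ∑ i, p i := Finset.sum_nonneg fun i _ => hp0 i
    have := hx ((l * ∑ i, p i - u) / (∑ i, p i + 1)) (by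
      apply div_pos <;> linarith)
    have e2 : (l * ∑ i, p i - u) / (∑ i, p i + 1) * ∑ i, p i ≤ l * ∑ i, p i - u := by
      rw [div_mul_eq_mul_div, div_le_iff₀ (by linarith)]
      nlinarith
    linarith
  have hsum : 0 < ∑ i, p i := by
    refine lt_of_le_of_ne (Finset.sum_nonneg fun i _ => hp0 i) fun h0 => ?_
    have hz : ∀ i, p i = 0 := fun i =>
      (Finset.sum_eq_zero_iff_of_nonneg fun i _ => hp0 i).1 h0.symm i (Finset.mem_univ i)
    have h1 := hfs (fun _ => l - 1) (fun j _ => by simp)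
    have h2 := hrank (fun _ => 1) (by
      intro h
      obtain ⟨a⟩ := ‹Nonempty m›
      simpa using congrFun h a)
    rw [hf] at h1
    simp only [hz, mul_zero, Finset.sum_const_zero] at h1 h2
    have h3 : 0 < rip (fun _ : m => (1 : ℂ)) (fun _ => 1) := by
      rw [rip_self]; simp [Fintype.card_pos]
    nlinarith
  have hP : IsProbDist fun i => (∑ i, p i)⁻¹ * p i :=
    ⟨fun i => mul_nonneg (inv_nonneg.2 hsum.le) (hp0 i), by
      rw [← Finset.mul_sum, inv_mul_cancel₀ hsum.ne']⟩
  have hlt := h _ hP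
  have hH : (∑ i, (((∑ i, p i)⁻¹ * p i : ℝ) : ℂ) • Ed i).PosSemidef :=
    Matrix.posSemidef_sum _ fun i _ => psd_smul (hE i) (hP.1 i)
  refine absurd hlt (not_lt.2 ((le_lamMin_iff hH.1 l).2 (psd_of_rip ?_ fun v => ?_)))
  · exact hH.1.sub (psd_smul_one_herm l)
  · rcases eq_or_ne v 0 with rfl | hv
    · simp [rip]
    · have h1 := hrank v hv
      rw [Matrix.sub_mulVec, rip_sub, Matrix.smul_mulVec, rip_smul, Matrix.one_mulVec,
        Matrix.sum_mulVec]
      have h2 : rip v (∑ i, ((((∑ i, p i)⁻¹ * p i : ℝ) : ℂ) • Ed i) *ᵥ v)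
          = (∑ i, p i)⁻¹ * ∑ i, rip v (Ed i *ᵥ v) * p i := by
        have : ∀ i, rip v (((((∑ i, p i)⁻¹ * p i : ℝ) : ℂ) • Ed i) *ᵥ v)
          = (∑ i, p i)⁻¹ * (rip v (Ed i *ᵥ v) * p i) := fun i => by
          rw [Matrix.smul_mulVec, rip_smul]; ring
        rw [Finset.mul_sum, ← Finset.sum_congr rfl fun i _ => this i]
        simp only [rip, dotProduct_sum, Complex.re_sum]
      rw [h2, sub_nonneg, le_inv_mul_iff₀ hsum]
      have n0 : 0 ≤ rip v v := by rw [rip_self]; positivity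
      nlinarith [mul_le_mul_of_nonneg_right hlu n0]
end lamsec

section mainsec
variable {d : ℕ} {ι : Type*} [Fintype ι]

lemma tpow_eq (Ed : ι → Matrix (Fin d) (Fin d) ℂ) (n : ℕ) (en : Fin n → ι) :
    tpow Ed n en = tens (fun k => Ed (en k)) := rfl

lemma tpow_bounds (Ed : ι → Matrix (Fin d) (Fin d) ℂ)
    (hE : ∀ i, (Ed i).PosSemidef ∧ (1 - Ed i).PosSemidef) (n : ℕ) (en : Fin n → ι) :
    (tpow Ed n en).PosSemidef ∧ (1 - tpow Ed n en).PosSemidef := by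
  rw [tpow_eq]
  refine ⟨tens_psd _ fun k => (hE _).1, ?_⟩
  rw [← tens_one]
  exact tens_mono _ _ (fun k => (hE _).1) fun k => (hE _).2

lemma weight_lower (Ed : ι → Matrix (Fin d) (Fin d) ℂ)
    (hE : ∀ i, (Ed i).PosSemidef) (ρ : Matrix (Fin d) (Fin d) ℂ) (h1 : ρ.PosSemidef)
    (h2 : ρ.trace = 1) (l : ℝ) (h3 : ∀ i, (ρ * Ed i).trace.re < l) (n : ℕ)
    (v : (Fin n → ι) → ℝ) (hv : ∀ en, 0 ≤ v en)
    (hcov : ((∑ en, (v en : ℂ) • tpow Ed n en) - 1).PosSemidef) :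
    1 ≤ (∑ en, v en) * l ^ n := by
  have hR := tens_psd (fun _ : Fin n => ρ) fun _ => h1
  have h4 := (Complex.le_def.1 (psd_trace_mul hR hcov)).1
  rw [mul_sub, mul_one, Matrix.trace_sub, tens_trace, Finset.mul_sum, Matrix.trace_sum] at h4
  have h5 : ∀ en : Fin n → ι, ((tens fun _ : Fin n => ρ) * (v en : ℂ) • tpow Ed n en).trace.re
      ≤ v en * l ^ n := by
    intro en
    rw [mul_smul_comm, Matrix.trace_smul, smul_eq_mul, Complex.re_ofReal_mul, tpow_eq, tens_mul,
      tens_trace]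
    have h6 : ∀ i, (ρ * Ed i).trace = (((ρ * Ed i).trace.re : ℝ) : ℂ) := fun i =>
      Complex.eq_re_of_ofReal_le (r := 0) (by simpa using psd_trace_mul h1 (hE i))
    have h7 : ∀ i, 0 ≤ (ρ * Ed i).trace.re := fun i =>
      (Complex.le_def.1 (psd_trace_mul h1 (hE i))).1
    rw [Finset.prod_congr rfl fun k _ => h6 (en k), ← Complex.ofReal_prod, Complex.ofReal_re]
    refine mul_le_mul_of_nonneg_left ?_ (hv en)
    calc _ ≤ ∏ _k : Fin n, l := Finset.prod_le_prod (fun k _ => h7 _) fun k _ => (h3 _).le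
      _ = _ := by simp
  rw [Complex.sub_re, Complex.re_sum] at h4
  simp only [h2, Finset.prod_const_one, Complex.one_re, Complex.zero_re] at h4
  have := Finset.sum_le_sum fun en (_ : en ∈ Finset.univ) => h5 en
  rw [← Finset.sum_mul] at this
  linarith

lemma cover_upper (hd : 2 ≤ d) (Ed : ι → Matrix (Fin d) (Fin d) ℂ)
    (hE : ∀ i, (Ed i).PosSemidef ∧ (1 - Ed i).PosSemidef) (P : ι → ℝ) (hP : IsProbDist P)
    (l : ℝ) (hl : 0 < l) (hl1 : l ≤ 1)
    (hM : ((∑ i, (P i : ℂ) • Ed i) - (l : ℂ) • 1).PosSemidef) (n : ℕ) (hn : 1 ≤ n) :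
    ∃ k : ℕ, (k : ℝ) ≤ 1 + 8 * Real.log d * n * (l ^ n)⁻¹ ∧ ∃ sel : Fin k → (Fin n → ι),
        ((∑ j, tpow Ed n (sel j)) - 1).PosSemidef := by
  have hd' : (2 : ℝ) ≤ d := by exact_mod_cast hd
  have hlogd : Real.log 2 ≤ Real.log d := Real.log_le_log (by norm_num) hd'
  have hlog2 : 0 < Real.log 2 := Real.log_pos (by norm_num)
  have hln : 0 < l ^ n := pow_pos hl n
  have hln1 : l ^ n ≤ 1 := pow_le_one₀ hl.le hl1
  have hn' : (1 : ℝ) ≤ n := by exact_mod_cast hn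
  have hx : 0 ≤ 8 * Real.log d * n * (l ^ n)⁻¹ := by
    have : 0 ≤ Real.log d := by linarith
    positivity
  refine ⟨⌊1 + 8 * Real.log d * n * (l ^ n)⁻¹⌋₊, Nat.floor_le (by linarith), ?_⟩
  have hp : IsProbDist fun en : Fin n → ι => ∏ k, P (en k) := by
    refine ⟨fun en => Finset.prod_nonneg fun k _ => hP.1 _, ?_⟩
    have := Finset.prod_univ_sum (fun _ : Fin n => (Finset.univ : Finset ι)) (fun _ i => P i)
    rw [Fintype.piFinset_univ] at this
    rw [← this]
    simp [hP.2]
  refine exists_cover (tpow Ed n) (tpow_bounds Ed hE n) _ hp (l ^ n) hln1 ?_ _ ?_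
  · have h1 := tens_mono (fun _ : Fin n => (l : ℂ) • (1 : Matrix (Fin d) (Fin d) ℂ))
      (fun _ => ∑ i, (P i : ℂ) • Ed i) (fun _ => psd_smul Matrix.PosSemidef.one hl.le)
      (fun _ => hM)
    rw [tens_smul (fun _ => (l : ℂ)) (fun _ => 1), tens_one,
      tens_sum (fun _ i => (P i : ℂ) • Ed i)] at h1
    simp only [Finset.prod_const, Finset.card_univ, Fintype.card_fin] at h1
    convert h1 using 2
    · refine Finset.sum_congr rfl fun en _ => ?_
      rw [tens_smul (fun k => (P (en k) : ℂ)) (fun k => Ed (en k)), tpow_eq]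
      simp
    · simp
  · set k := ⌊1 + 8 * Real.log d * n * (l ^ n)⁻¹⌋₊
    have hk : 8 * Real.log d * n * (l ^ n)⁻¹ ≤ k := by
      have := Nat.lt_floor_add_one (1 + 8 * Real.log d * n * (l ^ n)⁻¹)
      linarith
    have hk2 : 8 * Real.log d * n ≤ k * l ^ n := by
      rwa [← div_eq_mul_inv, div_le_iff₀ hln] at hk
    have hD : (Fintype.card (Fin n → Fin d) : ℝ) = Real.exp (n * Real.log d) := by
      rw [Real.exp_nat_mul, Real.exp_log (by linarith)]
      simp
    have hpow : (1 - 3/4 * l ^ n) ^ k ≤ Real.exp (- (3/4 * l ^ n) * k) := by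
      rw [mul_comm (-(3/4 * l ^ n)) (k : ℝ), Real.exp_nat_mul]
      refine pow_le_pow_left₀ (by linarith) ?_ k
      have := Real.add_one_le_exp (- (3/4 * l ^ n))
      linarith
    have hlow : Real.log 2 ≤ n * Real.log d := by nlinarith
    calc _ ≤ Real.exp (n * Real.log d) * Real.exp (- (3/4 * l ^ n) * k) := by
          rw [hD]; gcongr
      _ = Real.exp (n * Real.log d - (3/4 * l ^ n) * k) := by
          rw [← Real.exp_add]; ring_nf
      _ ≤ Real.exp (- ((5 : ℕ) * Real.log 2)) := by
          apply Real.exp_le_exp.2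
          push_cast
          nlinarith
      _ < 25 / 144 := by
          rw [Real.exp_neg, Real.exp_nat_mul, Real.exp_log (by norm_num)]
          norm_num
end mainsec

theorem stmt19 {d : ℕ} (hd : 2 ≤ d) {ι : Type*} [Fintype ι] [Nonempty ι]
    (Ed : ι → Matrix (Fin d) (Fin d) ℂ)
    (hE : ∀ i, (Ed i).PosSemidef ∧ (1 - Ed i).PosSemidef)
    (P₀ : ι → ℝ) (hP₀ : IsProbDist P₀) (hpos : (∑ i, (P₀ i : ℂ) • Ed i).PosDef)
    (C : ℝ)
    (hC : C = - Real.logb 2 (sSup {x | ∃ P : ι → ℝ, IsProbDist P ∧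
        x = lamMin (∑ i, (P i : ℂ) • Ed i)}))
    (c : ℕ → ℕ)
    (hc : ∀ n, c n = sInf {k : ℕ | ∃ sel : Fin k → (Fin n → ι),
        ((∑ j, tpow Ed n (sel j)) - 1).PosSemidef})
    (ct : ℕ → ℝ)
    (hct : ∀ n, ct n = sInf {s : ℝ | ∃ v : (Fin n → ι) → ℝ,
        (∀ en, 0 ≤ v en) ∧
        ((∑ en, (v en : ℂ) • tpow Ed n en) - 1).PosSemidef ∧
        s = ∑ en, v en}) :
    (∀ n : ℕ, 1 ≤ n → (2:ℝ) ^ (C * n) ≤ ct n) ∧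
    (∀ n : ℕ, 1 ≤ n →
      (c n : ℝ) ≤ 1 + 8 * (Real.log 2 * Real.logb 2 d) * n * (2:ℝ) ^ (C * n)) ∧
    Filter.Tendsto (fun n : ℕ => (n:ℝ)⁻¹ * Real.logb 2 (c n)) Filter.atTop (nhds C) ∧
    Filter.Tendsto (fun n : ℕ => (n:ℝ)⁻¹ * Real.logb 2 (ct n)) Filter.atTop (nhds C) := by
  classical
  have : Nonempty (Fin d) := ⟨⟨0, by omega⟩⟩
  set S := {x | ∃ P : ι → ℝ, IsProbDist P ∧ x = lamMin (∑ i, (P i : ℂ) • Ed i)} with hS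
  set L := sSup S with hL
  have hpsd : ∀ P : ι → ℝ, IsProbDist P → (∑ i, (P i : ℂ) • Ed i).PosSemidef := fun P hP =>
    Matrix.posSemidef_sum _ fun i _ => psd_smul (hE i).1 (hP.1 i)
  have hle1 : ∀ P : ι → ℝ, IsProbDist P → lamMin (∑ i, (P i : ℂ) • Ed i) ≤ 1 := by
    intro P hP
    have h1 := (le_lamMin_iff (hpsd P hP).1 _).1 le_rfl
    have h2 : (1 - ∑ i, (P i : ℂ) • Ed i).PosSemidef := by
      have h3 : (1 - ∑ i, (P i : ℂ) • Ed i) = ∑ i, (P i : ℂ) • (1 - Ed i) := by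
        simp only [smul_sub, Finset.sum_sub_distrib, ← Finset.sum_smul]
        rw [← Complex.ofReal_sum, hP.2]
        simp
      rw [h3]
      exact Matrix.posSemidef_sum _ fun i _ => psd_smul (hE i).2 (hP.1 i)
    generalize lamMin (∑ i, (P i : ℂ) • Ed i) = x at h1 ⊢
    have h4 := psd_trace_re (h1.add h2)
    have hdpos : (0 : ℝ) < d := by exact_mod_cast (by omega : 0 < d)
    simp at h4
    nlinarith
  have hbdd : BddAbove S := ⟨1, by rintro x ⟨P, hP, rfl⟩; exact hle1 P hP⟩
  have hne : S.Nonempty := ⟨_, P₀, hP₀, rfl⟩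
  have hL1 : L ≤ 1 := csSup_le hne (by rintro x ⟨P, hP, rfl⟩; exact hle1 P hP)
  have hL0 : 0 < L := by
    refine lt_of_lt_of_le ?_ (le_csSup hbdd ⟨P₀, hP₀, rfl⟩)
    rw [lamMin, dif_pos hpos.1]
    obtain ⟨i, hi⟩ := exists_eq_ciInf_of_finite (f := hpos.1.eigenvalues)
    rw [← hi]
    exact hpos.eigenvalues_pos i
  have h2C : ∀ n : ℕ, (2 : ℝ) ^ (C * n) = (L ^ n)⁻¹ := by
    intro n
    rw [Real.rpow_mul (by norm_num), Real.rpow_natCast, hC, Real.rpow_neg (by norm_num),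
      Real.rpow_logb (by norm_num) (by norm_num) hL0, inv_pow]
  have hlogd : Real.log 2 * Real.logb 2 d = Real.log d := by
    rw [Real.logb, mul_div_cancel₀]
    exact (Real.log_pos (by norm_num)).ne'
  -- upper bound and nonemptiness
  have hup : ∀ n : ℕ, 1 ≤ n → ∀ l : ℝ, 0 < l → l < L →
      ∃ k : ℕ, (k : ℝ) ≤ 1 + 8 * Real.log d * n * (l ^ n)⁻¹ ∧ ∃ sel : Fin k → (Fin n → ι),
        ((∑ j, tpow Ed n (sel j)) - 1).PosSemidef := by
    intro n hn l hl hlL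
    obtain ⟨x, ⟨P, hP, rfl⟩, hx⟩ := exists_lt_of_lt_csSup hne hlL
    exact cover_upper hd Ed hE P hP l hl (hlL.le.trans hL1)
      ((le_lamMin_iff (hpsd P hP).1 _).1 hx.le) n hn
  have hcmem : ∀ n : ℕ, 1 ≤ n → ∃ sel : Fin (c n) → (Fin n → ι),
        ((∑ j, tpow Ed n (sel j)) - 1).PosSemidef := by
    intro n hn
    obtain ⟨k, -, hk⟩ := hup n hn (L / 2) (by linarith) (by linarith)
    rw [hc n]
    exact Nat.sInf_mem (s := {k : ℕ | ∃ sel : Fin k → (Fin n → ι),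
        ((∑ j, tpow Ed n (sel j)) - 1).PosSemidef}) ⟨k, hk⟩
  have hcup : ∀ n : ℕ, 1 ≤ n → (c n : ℝ) ≤ 1 + 8 * Real.log d * n * (L ^ n)⁻¹ := by
    intro n hn
    have hev : ∀ᶠ l in nhdsWithin L (Set.Iio L),
        (c n : ℝ) ≤ 1 + 8 * Real.log d * n * (l ^ n)⁻¹ := by
      filter_upwards [Ioo_mem_nhdsLT hL0] with l hl
      obtain ⟨k, hk1, hk2⟩ := hup n hn l hl.1 hl.2
      refine le_trans ?_ hk1
      rw [hc n]
      exact_mod_cast Nat.sInf_le hk2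
    have hcont : ContinuousAt (fun l : ℝ => 1 + 8 * Real.log d * n * (l ^ n)⁻¹) L := by
      have : L ^ n ≠ 0 := (pow_pos hL0 n).ne'
      fun_prop (disch := assumption)
    exact ge_of_tendsto (hcont.tendsto.mono_left nhdsWithin_le_nhds) hev
  -- lower bound
  have hlow : ∀ n : ℕ, ∀ v : (Fin n → ι) → ℝ, (∀ en, 0 ≤ v en) →
      ((∑ en, (v en : ℂ) • tpow Ed n en) - 1).PosSemidef → (L ^ n)⁻¹ ≤ ∑ en, v en := by
    intro n v hv hcov
    have hev : ∀ᶠ l in nhdsWithin L (Set.Ioi L), 1 ≤ (∑ en, v en) * l ^ n := by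
      filter_upwards [self_mem_nhdsWithin] with l hl
      obtain ⟨ρ, h1, h2, h3⟩ := minimax Ed (fun i => (hE i).1) l fun P hP =>
        lt_of_le_of_lt (le_csSup hbdd ⟨P, hP, rfl⟩) hl
      exact weight_lower Ed (fun i => (hE i).1) ρ h1 h2 l h3 n v hv hcov
    have hcont : ContinuousAt (fun l : ℝ => (∑ en, v en) * l ^ n) L := by fun_prop
    have := ge_of_tendsto (hcont.tendsto.mono_left nhdsWithin_le_nhds) hev
    rwa [inv_le_iff_one_le_mul₀ (pow_pos hL0 n)]
  have hwt : ∀ n : ℕ, 1 ≤ n → ∃ v : (Fin n → ι) → ℝ,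
        (∀ en, 0 ≤ v en) ∧
        ((∑ en, (v en : ℂ) • tpow Ed n en) - 1).PosSemidef ∧
        (c n : ℝ) = ∑ en, v en := by
    intro n hn
    obtain ⟨sel, hsel⟩ := hcmem n hn
    refine ⟨fun en => ∑ j, if sel j = en then 1 else 0, fun en =>
      Finset.sum_nonneg fun j _ => by split_ifs <;> norm_num, ?_, ?_⟩
    · convert hsel using 2
      simp only [Complex.ofReal_sum, Finset.sum_smul]
      rw [Finset.sum_comm]
      refine Finset.sum_congr rfl fun j _ => ?_
      simp [apply_ite Complex.ofReal, ite_smul]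
    · rw [Finset.sum_comm]
      simp
  have hct1 : ∀ n : ℕ, 1 ≤ n → (L ^ n)⁻¹ ≤ ct n := by
    intro n hn
    rw [hct n]
    obtain ⟨v, hv⟩ := hwt n hn
    refine le_csInf ⟨_, v, hv⟩ ?_
    rintro s ⟨v, h1, h2, rfl⟩
    exact hlow n v h1 h2
  have hctc : ∀ n : ℕ, 1 ≤ n → ct n ≤ c n := by
    intro n hn
    rw [hct n]
    obtain ⟨v, hv⟩ := hwt n hn
    refine csInf_le ⟨(L ^ n)⁻¹, ?_⟩ ⟨v, hv⟩
    rintro s ⟨v, h1, h2, rfl⟩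
    exact hlow n v h1 h2
  have hd' : (2 : ℝ) ≤ d := by exact_mod_cast hd
  have hlogpos : 0 < Real.log d := Real.log_pos (by linarith)
  set K := 1 + 8 * Real.log d with hK
  have hlim : Filter.Tendsto (fun n : ℕ => C + (n:ℝ)⁻¹ * Real.logb 2 (K * n))
      Filter.atTop (nhds C) := by
    have h1 : Filter.Tendsto (fun n : ℕ => Real.log (n : ℝ) / (n : ℝ)) Filter.atTop (nhds 0) :=
      (Real.isLittleO_log_id_atTop.tendsto_div_nhds_zero).comp tendsto_natCast_atTop_atTop
    have h2 : Filter.Tendsto (fun n : ℕ => Real.log K / (n : ℝ)) Filter.atTop (nhds 0) :=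
      tendsto_const_div_atTop_nhds_zero_nat _
    have h3 := ((h1.add h2).div_const (Real.log 2)).const_add C
    simp only [add_zero, zero_div] at h3
    refine h3.congr' ?_
    filter_upwards [Filter.eventually_ge_atTop 1] with n hn
    have hn' : (1 : ℝ) ≤ n := by exact_mod_cast hn
    have hl2 : Real.log 2 ≠ 0 := (Real.log_pos (by norm_num)).ne'
    rw [Real.logb, Real.log_mul (by positivity) (by positivity)]
    field_simp
    ring
  have hsq : ∀ a : ℕ → ℝ, (∀ n, 1 ≤ n → (L ^ n)⁻¹ ≤ a n) → (∀ n, 1 ≤ n → a n ≤ c n) →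
      Filter.Tendsto (fun n : ℕ => (n:ℝ)⁻¹ * Real.logb 2 (a n)) Filter.atTop (nhds C) := by
    intro a h1 h2
    have hlogL : ∀ n : ℕ, Real.logb 2 ((L ^ n)⁻¹) = C * n := by
      intro n
      rw [← h2C, Real.logb_rpow (by norm_num) (by norm_num)]
    refine tendsto_of_tendsto_of_tendsto_of_le_of_le' (tendsto_const_nhds (x := C)) hlim ?_ ?_
    · filter_upwards [Filter.eventually_ge_atTop 1] with n hn
      have hn' : (0 : ℝ) < n := by exact_mod_cast hn
      have hp : 0 < (L ^ n)⁻¹ := by positivity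
      rw [le_inv_mul_iff₀ hn', mul_comm, ← hlogL]
      exact Real.logb_le_logb_of_le (by norm_num) hp (h1 n hn)
    · filter_upwards [Filter.eventually_ge_atTop 1] with n hn
      have hn' : (1 : ℝ) ≤ n := by exact_mod_cast hn
      have hp : 0 < (L ^ n)⁻¹ := by positivity
      have hp1 : 1 ≤ (L ^ n)⁻¹ := (one_le_inv₀ (by positivity)).2 (pow_le_one₀ hL0.le hL1)
      have h3 : a n ≤ K * n * (L ^ n)⁻¹ := by
        refine (h2 n hn).trans ((hcup n hn).trans ?_)
        have : 1 ≤ n * (L ^ n)⁻¹ := one_le_mul_of_one_le_of_one_le hn' hp1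
        rw [hK]
        linarith
      have h4 := Real.logb_le_logb_of_le (b := 2) (by norm_num) (hp.trans_le (h1 n hn)) h3
      rw [Real.logb_mul (by positivity) (by positivity), hlogL] at h4
      rw [inv_mul_le_iff₀ (by linarith), mul_add, mul_inv_cancel_left₀ (by positivity)]
      linarith
  refine ⟨fun n hn => ?_, fun n hn => ?_, ?_, ?_⟩
  · rw [h2C]
    exact hct1 n hn
  · rw [h2C, hlogd]
    exact hcup n hn
  · exact hsq (fun n => (c n : ℝ)) (fun n hn => (hct1 n hn).trans (hctc n hn)) fun n hn => le_rfl
  · exact hsq ct hct1 hctc
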